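/- Uniqueness of bounded weak solutions to the degenerate parabolic equation ∂_t ρ = ∇·(𝒜∇φ(ρ)) on the torus U^d = [−1,1]^d with periodic boundary conditions: if φ : [0,∞) → [0,∞) is Lipschitz and non-decreasing with φ(0) = 0, and 𝒜 is a constant symmetric matrix with ε₀|ξ|² ≤ ξ·𝒜ξ ≤ ε₀⁻¹|ξ|², then two bounded weak solutions (in the sense of the integral identity against C^{1,2} test functions) with the same bounded initial profile ρ₀ coincide almost everywhere on [0,T]×U^d. -/

import Mathlib

open MeasureTheory

namespace WeakSolUniq

variable (dd : ℕ)

/-- the box `U^d = [−1,1]^d` -/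
def Box (dd : ℕ) : Set (Fin dd → ℝ) := Set.univ.pi fun _ => Set.Icc (-1 : ℝ) 1

/-- periodicity with period `2` in each coordinate -/
def SpacePeriodic {dd : ℕ} (f : (Fin dd → ℝ) → ℝ) : Prop :=
  ∀ (u : Fin dd → ℝ) (k : Fin dd → ℤ), f (fun i => u i + 2 * (k i : ℝ)) = f u

/-- `∇·𝒜∇G(u) = ∑_{i,j} 𝒜_{ij} ∂_i ∂_j G(u)` for a constant matrix `𝒜` -/
noncomputable def divAGrad {dd : ℕ} (𝒜 : Matrix (Fin dd) (Fin dd) ℝ)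
    (G : (Fin dd → ℝ) → ℝ) (u : Fin dd → ℝ) : ℝ :=
  ∑ i, ∑ j, 𝒜 i j *
    fderiv ℝ (fun v => fderiv ℝ G v (Pi.single j (1 : ℝ))) u (Pi.single i (1 : ℝ))

/-- bounded weak solution of `∂_t ρ = ∇·(𝒜∇φ(ρ))` on the torus, tested against
periodic test functions `G` of class `C^{1,2}` (we take jointly `C²`): for all
such `G`, `∫₀^T∫ [ρ ∂_s G + φ(ρ) ∇·𝒜∇G] du ds + ∫ ρ₀ G(0,·) = ∫ ρ(T,·) G(T,·)`. -/
def IsWeakSolution {dd : ℕ} (T : ℝ) (𝒜 : Matrix (Fin dd) (Fin dd) ℝ)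
    (φ : ℝ → ℝ) (ρ₀ : (Fin dd → ℝ) → ℝ) (ρ : ℝ → (Fin dd → ℝ) → ℝ) : Prop :=
  Measurable (fun p : ℝ × (Fin dd → ℝ) => ρ p.1 p.2) ∧
  (∃ Mb : ℝ, ∀ t u, |ρ t u| ≤ Mb) ∧
  (∀ t, SpacePeriodic (ρ t)) ∧
  ∀ G : ℝ → (Fin dd → ℝ) → ℝ,
    ContDiff ℝ 2 (fun p : ℝ × (Fin dd → ℝ) => G p.1 p.2) →
    (∀ t, SpacePeriodic (G t)) →
    (∫ s in Set.Icc (0 : ℝ) T, ∫ u in Box dd,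
        (ρ s u * deriv (fun r => G r u) s + φ (ρ s u) * divAGrad 𝒜 (G s) u))
      + ∫ u in Box dd, ρ₀ u * G 0 u
      = ∫ u in Box dd, ρ T u * G T u

end WeakSolUniq

open WeakSolUniq

/-!
Write `w = ρ₁ - ρ₂` and `v = φ(ρ₁) - φ(ρ₂)`. The real Fourier modes of the torus are eigenfunctions
of `∇·𝒜∇`, with eigenvalues `-λ_k ≤ 0`. Testing the two equations against the mode of frequency
`k` times a function of time gives `ŵ_k(t) = -λ_k ∫₀ᵗ v̂_k` for almost every `t`, whence
`∫₀ᵀ ŵ_k v̂_k = -(λ_k / 2) (∫₀ᵀ v̂_k)² ≤ 0`. Summing over `k`, Parseval's identity yields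
`∫∫ w v ≤ 0`, while `w v ≥ 0` pointwise because `φ` is monotone. Hence `w v = 0` almost everywhere,
which forces `v = 0`; then every `ŵ_k` vanishes and `w = 0`.
-/

namespace WeakSolUniq

open Set Matrix UnitAddTorus
open scoped ContDiff Interval ComplexConjugate

section Primitive

theorem integral_mul_primitive_add_primitive_mul {a b : ℝ} {U V : ℝ → ℝ}
    (hU : IntervalIntegrable U volume a b) (hV : IntervalIntegrable V volume a b) :
    ∫ t in a..b, (U t * (∫ s in a..t, V s) + (∫ s in a..t, U s) * V t) =
      (∫ t in a..b, U t) * ∫ t in a..b, V t := by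
  have parts := (hU.absolutelyContinuousOnInterval_intervalIntegral
    left_mem_uIcc).integral_deriv_mul_eq_sub
    (hV.absolutelyContinuousOnInterval_intervalIntegral left_mem_uIcc)
  simp only [intervalIntegral.integral_same, mul_zero, sub_zero] at parts
  rw [← parts]
  refine intervalIntegral.integral_congr_ae ?_
  filter_upwards [hU.ae_hasDerivAt_integral, hV.ae_hasDerivAt_integral] with t hUt hVt ht
  rw [(hUt (uIoc_subset_uIcc ht) a left_mem_uIcc).deriv,
    (hVt (uIoc_subset_uIcc ht) a left_mem_uIcc).deriv]

theorem integral_primitive_mul_self {a b : ℝ} {V : ℝ → ℝ}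
    (hV : IntervalIntegrable V volume a b) :
    ∫ t in a..b, (∫ s in a..t, V s) * V t = (∫ t in a..b, V t) ^ 2 / 2 := by
  have parts := integral_mul_primitive_add_primitive_mul hV hV
  simp only [mul_comm (V _), ← two_mul, intervalIntegral.integral_const_mul] at parts
  linarith

theorem integral_sub_primitive_mul_eq_zero {a b : ℝ} {W V : ℝ → ℝ}
    (hW : IntervalIntegrable W volume a b) (hV : IntervalIntegrable V volume a b)
    (h : ∀ θ : ℝ → ℝ, ContDiff ℝ ∞ θ → θ b = 0 →
      ∫ t in a..b, (W t * deriv θ t + V t * θ t) = 0)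
    {η : ℝ → ℝ} (hη : ContDiff ℝ ∞ η) :
    ∫ t in a..b, η t * (W t - ∫ s in a..t, V s) = 0 := by
  have hηi : ∀ c d, IntervalIntegrable η volume c d := hη.continuous.intervalIntegrable
  have hderiv : ∀ t, HasDerivAt (fun t ↦ ∫ s in b..t, η s) (η t) t :=
    fun t ↦ (hη.continuous.integral_hasStrictDerivAt b t).hasDerivAt
  have hθ : ContDiff ℝ ∞ fun t ↦ ∫ s in b..t, η s :=
    contDiff_infty_iff_deriv.2 ⟨fun t ↦ (hderiv t).differentiableAt,
      by rwa [funext fun t ↦ (hderiv t).deriv]⟩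
  have tested := h _ hθ intervalIntegral.integral_same
  simp only [(hderiv _).deriv] at tested
  have parts := integral_mul_primitive_add_primitive_mul hV (hηi a b)
  have hF := intervalIntegral.continuousOn_primitive_interval' hV left_mem_uIcc
  have hE := intervalIntegral.continuousOn_primitive_interval' (hηi a b) left_mem_uIcc
  have htest_int := (hW.mul_continuousOn hη.continuous.continuousOn).add
    (hV.mul_continuousOn hθ.continuous.continuousOn)
  have hparts_int := (hV.mul_continuousOn hE).add ((hηi a b).continuousOn_mul hF)
  calc ∫ t in a..b, η t * (W t - ∫ s in a..t, V s)
      = ∫ t in a..b, ((W t * η t + V t * ∫ s in b..t, η s) -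
          (V t * (∫ s in a..t, η s) + (∫ s in a..t, V s) * η t) +
          V t * ∫ s in a..b, η s) := by
        congr 1 with t
        rw [← intervalIntegral.integral_interval_sub_left (hηi a t) (hηi a b)]
        ring
    _ = 0 := by
        rw [intervalIntegral.integral_add (htest_int.sub hparts_int) (hV.mul_const _),
          intervalIntegral.integral_sub htest_int hparts_int, tested, parts,
          intervalIntegral.integral_mul_const]
        ring

theorem ae_eq_primitive_of_forall_integral_deriv_add {a b : ℝ} (hab : a ≤ b) {W V : ℝ → ℝ}
    (hW : IntervalIntegrable W volume a b) (hV : IntervalIntegrable V volume a b)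
    (h : ∀ θ : ℝ → ℝ, ContDiff ℝ ∞ θ → θ b = 0 →
      ∫ t in a..b, (W t * deriv θ t + V t * θ t) = 0) :
    ∀ᵐ t ∂volume.restrict (Icc a b), W t = ∫ s in a..t, V s := by
  have hF := intervalIntegral.continuousOn_primitive_interval' hV left_mem_uIcc
  have hint : IntegrableOn (fun t ↦ W t - ∫ s in a..t, V s) (Ioo a b) :=
    (intervalIntegrable_iff_integrableOn_Ioo_of_le hab).1 (hW.sub hF.intervalIntegrable)
  have hzero := isOpen_Ioo.ae_eq_zero_of_integral_contDiff_smul_eq_zero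
    hint.locallyIntegrableOn fun η hη _ hsupp ↦ by
      rw [← integral_sub_primitive_mul_eq_zero hW hV h hη, intervalIntegral.integral_of_le hab]
      refine (setIntegral_eq_integral_of_forall_compl_eq_zero fun t ht ↦ ?_).symm
      have : t ∉ tsupport η := fun hmem ↦ ht (Ioo_subset_Ioc_self (hsupp hmem))
      simp [image_eq_zero_of_notMem_tsupport this]
  rw [← restrict_Ioo_eq_restrict_Icc, ae_restrict_iff' measurableSet_Ioo]
  filter_upwards [hzero] with t ht hmem using sub_eq_zero.1 (ht hmem)

end Primitive

section TightFrame

variable {α X ι : Type*} [MeasurableSpace α] [MeasurableSpace X]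

/-- A tight frame of `L²(μ)` with frame bound `c`: analysis coefficients `∫ f * e i ∂μ` satisfy
Parseval's identity up to the factor `c`. The identity is polarized, and stated for
square-integrable functions rather than for their classes in `Lp`. -/
structure IsTightFrame (e : ι → X → ℝ) (c : ℝ) (μ : Measure X) : Prop where
  pos : 0 < c
  memLp (i : ι) : MemLp (e i) 2 μ
  hasSum {f g : X → ℝ} (hf : MemLp f 2 μ) (hg : MemLp g 2 μ) :
    HasSum (fun i ↦ (∫ u, f u * e i u ∂μ) * ∫ u, g u * e i u ∂μ) (c * ∫ u, f u * g u ∂μ)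

theorem ae_memLp_two_prodMk_left {ν : Measure α} {μ : Measure X} [SFinite ν] [SFinite μ]
    {f : α → X → ℝ} (hf : MemLp (fun p : α × X ↦ f p.1 p.2) 2 (ν.prod μ)) :
    ∀ᵐ t ∂ν, MemLp (f t) 2 μ := by
  filter_upwards [hf.1.prodMk_left, hf.integrable_sq.prod_right_ae] with t hmeas hsq
  exact (memLp_two_iff_integrable_sq hmeas).2 hsq

namespace IsTightFrame

variable {e : ι → X → ℝ} {c : ℝ} {μ : Measure X}

theorem of_comp_measurePreserving {Y : Type*} [MeasurableSpace Y] {τ : Y → X}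
    {ν : Measure Y} (hτ : MeasurePreserving τ ν μ) (hmeas : ∀ i, AEStronglyMeasurable (e i) μ)
    (he : IsTightFrame (fun i ↦ e i ∘ τ) c ν) : IsTightFrame e c μ := by
  have hmem (i : ι) : MemLp (e i) 2 μ := by
    simpa [hτ.map_eq] using (memLp_map_measure_iff (by rw [hτ.map_eq]; exact hmeas i)
      hτ.aemeasurable).2 (he.memLp i)
  have hint {f g : X → ℝ} (hf : MemLp f 2 μ) (hg : MemLp g 2 μ) :
      ∫ u, f u * g u ∂μ = ∫ y, (f ∘ τ) y * (g ∘ τ) y ∂ν := by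
    rw [← hτ.map_eq] at hf hg ⊢
    exact integral_map hτ.aemeasurable (hf.1.mul hg.1)
  refine ⟨he.pos, hmem, fun hf hg ↦ ?_⟩
  simp only [hint hf (hmem _), hint hg (hmem _), hint hf hg]
  exact he.hasSum (hf.comp_measurePreserving hτ) (hg.comp_measurePreserving hτ)

theorem of_smul_measure {a : ℝ} (ha : 0 < a)
    (he : IsTightFrame e c (ENNReal.ofReal a • μ)) : IsTightFrame e (c / a) μ := by
  have hmem {f : X → ℝ} : MemLp f 2 (ENNReal.ofReal a • μ) ↔ MemLp f 2 μ := by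
    refine ⟨fun h ↦ ?_, fun h ↦ h.smul_measure ENNReal.ofReal_ne_top⟩
    have h' := h.smul_measure (c := ENNReal.ofReal a⁻¹) ENNReal.ofReal_ne_top
    rwa [smul_smul, ← ENNReal.ofReal_mul (by positivity), inv_mul_cancel₀ ha.ne',
      ENNReal.ofReal_one, one_smul] at h'
  refine ⟨div_pos he.pos ha, fun i ↦ hmem.1 (he.memLp i), fun {f g} hf hg ↦ ?_⟩
  have hsum := (he.hasSum (hmem.2 hf) (hmem.2 hg)).div_const (a ^ 2)
  simp only [integral_smul_measure, ENNReal.toReal_ofReal ha.le, smul_eq_mul] at hsum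
  rw [show c / a * ∫ u, f u * g u ∂μ = c * (a * ∫ u, f u * g u ∂μ) / a ^ 2 by field_simp]
  exact hsum.congr_fun fun i ↦ by field_simp

variable {ν : Measure α} [SFinite μ] {f g : α → X → ℝ}

theorem aestronglyMeasurable_coeff (he : IsTightFrame e c μ)
    (hf : MemLp (fun p : α × X ↦ f p.1 p.2) 2 (ν.prod μ)) (i : ι) :
    AEStronglyMeasurable (fun t ↦ ∫ u, f t u * e i u ∂μ) ν :=
  (hf.1.mul (he.memLp i).1.comp_snd).integral_prod_right'

variable [SFinite ν] [Countable ι]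

theorem hasSum_integral (he : IsTightFrame e c μ)
    (hf : MemLp (fun p : α × X ↦ f p.1 p.2) 2 (ν.prod μ))
    (hg : MemLp (fun p : α × X ↦ g p.1 p.2) 2 (ν.prod μ)) :
    HasSum (fun i ↦ ∫ t, (∫ u, f t u * e i u ∂μ) * (∫ u, g t u * e i u ∂μ) ∂ν)
      (c * ∫ p, f p.1 p.2 * g p.1 p.2 ∂ν.prod μ) := by
  have henergy {F : α → X → ℝ} (hF : MemLp (fun p : α × X ↦ F p.1 p.2) 2 (ν.prod μ)) :
      Integrable (fun t ↦ ∫ u, F t u * F t u ∂μ) ν := (hF.integrable_mul hF).integral_prod_left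
  have hbound : ∀ᵐ t ∂ν, HasSum
      (fun i ↦ ((∫ u, f t u * e i u ∂μ) * (∫ u, f t u * e i u ∂μ) +
        (∫ u, g t u * e i u ∂μ) * ∫ u, g t u * e i u ∂μ) / 2)
      ((c * (∫ u, f t u * f t u ∂μ) + c * ∫ u, g t u * g t u ∂μ) / 2) := by
    filter_upwards [ae_memLp_two_prodMk_left hf, ae_memLp_two_prodMk_left hg] with t hft hgt
    exact ((he.hasSum hft hft).add (he.hasSum hgt hgt)).div_const 2
  have hprod := integral_prod _ (hf.integrable_mul hg)
  simp only [Pi.mul_apply] at hprod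
  rw [hprod, ← integral_const_mul]
  refine hasSum_integral_of_dominated_convergence _
    (fun i ↦ (he.aestronglyMeasurable_coeff hf i).mul (he.aestronglyMeasurable_coeff hg i))
    (fun i ↦ .of_forall fun t ↦ ?_) (hbound.mono fun t ht ↦ ht.summable) ?_ ?_
  · -- `|x y| ≤ (x² + y²) / 2`; the coefficient energies of `f` and `g` sum to multiples of their
    -- `L²` norms, which are integrable in `t`.
    rw [Real.norm_eq_abs, abs_le]
    constructor <;> nlinarith [sq_nonneg ((∫ u, f t u * e i u ∂μ) + ∫ u, g t u * e i u ∂μ),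
      sq_nonneg ((∫ u, f t u * e i u ∂μ) - ∫ u, g t u * e i u ∂μ)]
  · exact (((henergy hf).const_mul c).add ((henergy hg).const_mul c)).div_const 2 |>.congr
      (hbound.mono fun t ht ↦ ht.tsum_eq.symm)
  · filter_upwards [ae_memLp_two_prodMk_left hf, ae_memLp_two_prodMk_left hg] with t hft hgt
    exact he.hasSum hft hgt

theorem integral_mul_nonpos (he : IsTightFrame e c μ)
    (hf : MemLp (fun p : α × X ↦ f p.1 p.2) 2 (ν.prod μ))
    (hg : MemLp (fun p : α × X ↦ g p.1 p.2) 2 (ν.prod μ))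
    (h : ∀ i, ∫ t, (∫ u, f t u * e i u ∂μ) * (∫ u, g t u * e i u ∂μ) ∂ν ≤ 0) :
    ∫ p, f p.1 p.2 * g p.1 p.2 ∂ν.prod μ ≤ 0 :=
  nonpos_of_mul_nonpos_right ((he.hasSum_integral hf hg).nonpos h) he.pos

theorem ae_eq_zero_of_coeff (he : IsTightFrame e c μ)
    (hf : MemLp (fun p : α × X ↦ f p.1 p.2) 2 (ν.prod μ))
    (h : ∀ i, ∀ᵐ t ∂ν, ∫ u, f t u * e i u ∂μ = 0) :
    ∀ᵐ p ∂ν.prod μ, f p.1 p.2 = 0 := by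
  have hnonpos : ∫ p, f p.1 p.2 * f p.1 p.2 ∂ν.prod μ ≤ 0 :=
    he.integral_mul_nonpos hf hf fun i ↦ (integral_eq_zero_of_ae <| by
      filter_upwards [h i] with t ht
      simp [ht]).le
  have hnonneg : 0 ≤ fun p : α × X ↦ f p.1 p.2 * f p.1 p.2 := fun p ↦ mul_self_nonneg _
  filter_upwards [(integral_eq_zero_iff_of_nonneg hnonneg (hf.integrable_mul hf)).1
    (hnonpos.antisymm (integral_nonneg hnonneg))] with p hp
  exact mul_self_eq_zero.1 hp

end IsTightFrame

end TightFrame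

section Hartley

attribute [local instance] instMeasureSpaceUnitAddCircle
attribute [local instance] instIsProbabilityMeasureUnitAddCircleVolume

section Torus

variable {d : Type*} [Fintype d]

/-- The character `cas (2πk⋅x) = cos (2πk⋅x) + sin (2πk⋅x)` of Hartley's transform on the unit
torus, a real-valued substitute for `mFourier k`. -/
noncomputable def torusHartley (k : d → ℤ) (x : UnitAddTorus d) : ℝ :=
  (mFourier k x).re + (mFourier k x).im

theorem continuous_torusHartley (k : d → ℤ) : Continuous (torusHartley k) :=
  (Complex.continuous_re.comp (mFourier k).continuous).add
    (Complex.continuous_im.comp (mFourier k).continuous)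

theorem integral_mul_torusHartley {F : UnitAddTorus d → ℝ} (hF : Integrable F) (k : d → ℤ) :
    ∫ x, F x * torusHartley k x =
      (mFourierCoeff (fun x ↦ (F x : ℂ)) k).re - (mFourierCoeff (fun x ↦ (F x : ℂ)) k).im := by
  have hint : Integrable fun x ↦ mFourier (-k) x • (F x : ℂ) :=
    hF.ofReal.bdd_mul (c := 1) (mFourier (-k)).continuous.aestronglyMeasurable <| .of_forall fun x ↦
      ((mFourier (-k)).norm_coe_le_norm x).trans mFourier_norm.le
  have hlin := (Complex.reCLM - Complex.imCLM).integral_comp_comm hint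
  simp only [_root_.sub_apply, Complex.reCLM_apply, Complex.imCLM_apply] at hlin
  rw [mFourierCoeff, ← hlin]
  congr 1 with x
  simp only [torusHartley, mFourier_neg, smul_eq_mul, Complex.mul_re, Complex.mul_im,
    Complex.conj_re, Complex.conj_im, Complex.ofReal_re, Complex.ofReal_im]
  ring

theorem mFourierCoeff_neg_ofReal (F : UnitAddTorus d → ℝ) (k : d → ℤ) :
    mFourierCoeff (fun x ↦ (F x : ℂ)) (-k) = conj (mFourierCoeff (fun x ↦ (F x : ℂ)) k) := by
  simp [mFourierCoeff, ← integral_conj, mFourier_neg]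

theorem hasSum_conj_mFourierCoeff_mul {F G : UnitAddTorus d → ℂ} (hF : MemLp F 2)
    (hG : MemLp G 2) :
    HasSum (fun k ↦ conj (mFourierCoeff F k) * mFourierCoeff G k) (∫ x, conj (F x) * G x) := by
  have hcoeff {H : UnitAddTorus d → ℂ} (hH : MemLp H 2) (k : d → ℤ) :
      mFourierCoeff (hH.toLp H) k = mFourierCoeff H k :=
    integral_congr_ae (ae_eq_rfl.mul hH.coeFn_toLp)
  have hsum := hasSum_prod_mFourierCoeff (hF.toLp F) (hG.toLp G)
  have hint : ∫ x, conj (hF.toLp F x) * hG.toLp G x = ∫ x, conj (F x) * G x :=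
    integral_congr_ae ((hF.coeFn_toLp.fun_comp conj).mul hG.coeFn_toLp)
  simpa only [hcoeff, hint] using hsum

theorem hasSum_im_mFourierCoeff_mul {F G : UnitAddTorus d → ℝ} (hF : MemLp F 2)
    (hG : MemLp G 2) :
    HasSum (fun k ↦ (mFourierCoeff (fun x ↦ (F x : ℂ)) k *
      mFourierCoeff (fun x ↦ (G x : ℂ)) k).im) 0 := by
  have hFC : MemLp (fun x ↦ (F x : ℂ)) 2 := hF.ofReal
  have hGC : MemLp (fun x ↦ (G x : ℂ)) 2 := hG.ofReal
  have hsum : Summable fun k ↦ (mFourierCoeff (fun x ↦ (F x : ℂ)) k *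
      mFourierCoeff (fun x ↦ (G x : ℂ)) k).im :=
    .of_norm_bounded (hasSum_conj_mFourierCoeff_mul hFC hGC).summable.norm
      fun k ↦ (Complex.abs_im_le_norm _).trans_eq (by simp only [norm_mul, RCLike.norm_conj])
  -- The coefficients of real functions are conjugate symmetric, so the summand is odd in `k`.
  have hodd := (Equiv.neg (d → ℤ)).tsum_eq fun k ↦ (mFourierCoeff (fun x ↦ (F x : ℂ)) k *
      mFourierCoeff (fun x ↦ (G x : ℂ)) k).im
  simp only [Equiv.neg_apply, mFourierCoeff_neg_ofReal, ← map_mul, Complex.conj_im, tsum_neg]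
    at hodd
  simpa only [neg_eq_self.1 hodd] using hsum.hasSum

theorem isTightFrame_torusHartley :
    IsTightFrame (torusHartley (d := d)) 1 (volume : Measure (UnitAddTorus d)) where
  pos := one_pos
  memLp k := (continuous_torusHartley k).memLp_of_hasCompactSupport (.of_compactSpace _)
  hasSum {F G} hF hG := by
    have hFC : MemLp (fun x ↦ (F x : ℂ)) 2 := hF.ofReal
    have hGC : MemLp (fun x ↦ (G x : ℂ)) 2 := hG.ofReal
    have hsum := (Complex.hasSum_re (hasSum_conj_mFourierCoeff_mul hFC hGC)).sub
      (hasSum_im_mFourierCoeff_mul hF hG)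
    have hint : ∫ x, conj (F x : ℂ) * G x = ((∫ x, F x * G x : ℝ) : ℂ) := by
      simp_rw [Complex.conj_ofReal, ← Complex.ofReal_mul, integral_complex_ofReal]
    rw [hint, Complex.ofReal_re, sub_zero] at hsum
    rw [one_mul]
    refine hsum.congr_fun fun k ↦ ?_
    rw [integral_mul_torusHartley (hF.integrable one_le_two),
      integral_mul_torusHartley (hG.integrable one_le_two)]
    simp only [Complex.mul_re, Complex.mul_im, Complex.conj_re, Complex.conj_im]
    ring

end Torus

variable {dd : ℕ}

theorem isCompact_box (dd : ℕ) : IsCompact (Box dd) := isCompact_univ_pi fun _ ↦ isCompact_Icc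

instance isFiniteMeasure_restrict_box (dd : ℕ) :
    IsFiniteMeasure ((volume : Measure (Fin dd → ℝ)).restrict (Box dd)) :=
  isFiniteMeasure_restrict.2 (isCompact_box dd).measure_ne_top

/-- The wave vector `πk` of the `k`-th mode on the torus of period `2`. -/
noncomputable def waveVector (k : Fin dd → ℤ) : Fin dd → ℝ := fun i ↦ Real.pi * k i

/-- The `k`-th Hartley mode `cos (πk⋅u) + sin (πk⋅u)` on the torus of period `2`, used as test
function. One real function per frequency avoids separate sine and cosine coefficients. -/
noncomputable def hartley (k : Fin dd → ℤ) (u : Fin dd → ℝ) : ℝ :=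
  Real.cos (waveVector k ⬝ᵥ u) + Real.sin (waveVector k ⬝ᵥ u)

theorem contDiff_hartley (k : Fin dd → ℤ) {n : WithTop ℕ∞} : ContDiff ℝ n (hartley k) := by
  have : ContDiff ℝ n fun u : Fin dd → ℝ ↦ waveVector k ⬝ᵥ u := by
    unfold dotProduct
    fun_prop
  exact this.cos.add this.sin

theorem spacePeriodic_hartley (k : Fin dd → ℤ) : SpacePeriodic (hartley k) := fun u m ↦ by
  have hshift : waveVector k ⬝ᵥ (fun i ↦ u i + 2 * (m i : ℝ)) =
      waveVector k ⬝ᵥ u + ((k ⬝ᵥ m : ℤ) : ℝ) * (2 * Real.pi) := by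
    simp only [waveVector, dotProduct, Int.cast_sum, Int.cast_mul, Finset.sum_mul,
      ← Finset.sum_add_distrib]
    exact Finset.sum_congr rfl fun i _ ↦ by ring
  simp only [hartley, hshift, Real.cos_add_int_mul_two_pi, Real.sin_add_int_mul_two_pi]

/-- The coordinates in `(-1, 1]^d` of a point of the unit torus, obtained by doubling those
in `(-1/2, 1/2]^d`. -/
noncomputable def boxCoord (dd : ℕ) (x : UnitAddTorus (Fin dd)) : Fin dd → ℝ :=
  (2 : ℝ) • (measurableEquivPiIoc (fun _ ↦ (-1 / 2 : ℝ)) x : Fin dd → ℝ)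

theorem measurePreserving_two_smul_box (dd : ℕ) :
    MeasurePreserving (fun u : Fin dd → ℝ ↦ (2 : ℝ) • u)
      (volume.restrict {u | ∀ i, u i ∈ Ioc (-1 / 2 : ℝ) (-1 / 2 + 1)})
      (ENNReal.ofReal (2 ^ dd)⁻¹ • volume.restrict (Box dd)) := by
  have hscale : MeasurePreserving (fun u : Fin dd → ℝ ↦ (2 : ℝ) • u) volume
      (ENNReal.ofReal (2 ^ dd)⁻¹ • volume) :=
    ⟨by fun_prop, by simp [Measure.map_addHaar_smul, abs_of_pos]⟩
  have hbox : (Box dd : Set (Fin dd → ℝ)) =ᵐ[volume] univ.pi fun _ ↦ Ioc (-1 : ℝ) 1 := by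
    rw [Box, pi_univ_Icc]
    exact Measure.univ_pi_Ioc_ae_eq_Icc.symm
  have hpre : {u : Fin dd → ℝ | ∀ i, u i ∈ Ioc (-1 / 2 : ℝ) (-1 / 2 + 1)} =
      (fun u ↦ (2 : ℝ) • u) ⁻¹' univ.pi fun _ ↦ Ioc (-1 : ℝ) 1 := by
    ext u
    simp only [mem_ofPred_eq, mem_preimage, mem_univ_pi, Pi.smul_apply, smul_eq_mul, mem_Ioc]
    exact forall_congr' fun i ↦ by constructor <;> rintro ⟨_, _⟩ <;> constructor <;> linarith
  rw [hpre, Measure.restrict_congr_set hbox, ← Measure.restrict_smul]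
  exact hscale.restrict_preimage (.univ_pi fun _ ↦ measurableSet_Ioc)

theorem measurePreserving_boxCoord (dd : ℕ) :
    MeasurePreserving (boxCoord dd) volume
      (ENNReal.ofReal (2 ^ dd)⁻¹ • volume.restrict (Box dd)) :=
  (measurePreserving_two_smul_box dd).comp <|
    (measurePreserving_subtype_coe <| .univ_pi' fun _ ↦ measurableSet_Ioc).comp
      (measurePreserving_equivPiIoc _)

theorem mFourier_eq_exp_boxCoord (k : Fin dd → ℤ) (x : UnitAddTorus (Fin dd)) :
    mFourier k x = Complex.exp ((waveVector k ⬝ᵥ boxCoord dd x : ℝ) * Complex.I) := by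
  rw [mFourier, ContinuousMap.coe_mk, dotProduct, Complex.ofReal_sum, Finset.sum_mul,
    Complex.exp_sum]
  refine Finset.prod_congr rfl fun i _ ↦ ?_
  conv_lhs => rw [← AddCircle.coe_equivIoc (p := 1) (a := -1 / 2) (y := x i), fourier_coe_apply]
  simp only [waveVector, boxCoord, coe_measurableEquivPiIoc_apply, Pi.smul_apply, smul_eq_mul]
  push_cast
  ring_nf

theorem hartley_comp_boxCoord (k : Fin dd → ℤ) : hartley k ∘ boxCoord dd = torusHartley k := by
  ext x
  rw [torusHartley, mFourier_eq_exp_boxCoord, Complex.exp_ofReal_mul_I_re,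
    Complex.exp_ofReal_mul_I_im]
  rfl

theorem isTightFrame_hartley (dd : ℕ) :
    IsTightFrame (hartley (dd := dd)) (2 ^ dd) (volume.restrict (Box dd)) := by
  have htorus : IsTightFrame (fun k ↦ hartley k ∘ boxCoord dd) 1 volume := by
    simpa only [hartley_comp_boxCoord] using isTightFrame_torusHartley
  simpa using (IsTightFrame.of_comp_measurePreserving (measurePreserving_boxCoord dd)
    (fun k ↦ (contDiff_hartley (n := 0) k).continuous.aestronglyMeasurable) htorus).of_smul_measure
      (by positivity)

end Hartley

section ConstantCoefficients

variable {dd : ℕ}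

theorem fderiv_comp_dotProduct_single {g : ℝ → ℝ} {g' : ℝ} {ξ u : Fin dd → ℝ}
    (hg : HasDerivAt g g' (ξ ⬝ᵥ u)) (i : Fin dd) :
    fderiv ℝ (fun v ↦ g (ξ ⬝ᵥ v)) u (Pi.single i 1) = g' * ξ i := by
  have hdot : HasFDerivAt (fun v ↦ ξ ⬝ᵥ v)
      (∑ j, ξ j • ContinuousLinearMap.proj (R := ℝ) (φ := fun _ ↦ ℝ) j) u :=
    .fun_sum fun j _ ↦ (hasFDerivAt_apply j u).const_mul (ξ j)
  have hcomp : HasFDerivAt (fun v ↦ g (ξ ⬝ᵥ v)) _ u := hg.comp_hasFDerivAt u hdot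
  simp [hcomp.fderiv, Pi.single_apply]

theorem divAGrad_comp_dotProduct (𝒜 : Matrix (Fin dd) (Fin dd) ℝ) {f f' : ℝ → ℝ} {f'' : ℝ}
    {ξ u : Fin dd → ℝ} (hf : ∀ r, HasDerivAt f (f' r) r) (hf' : HasDerivAt f' f'' (ξ ⬝ᵥ u)) :
    divAGrad 𝒜 (fun v ↦ f (ξ ⬝ᵥ v)) u = (ξ ⬝ᵥ 𝒜 *ᵥ ξ) * f'' := by
  have hfirst (j : Fin dd) : (fun v ↦ fderiv ℝ (fun v ↦ f (ξ ⬝ᵥ v)) v (Pi.single j 1)) =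
      fun v ↦ f' (ξ ⬝ᵥ v) * ξ j :=
    funext fun v ↦ fderiv_comp_dotProduct_single (hf _) j
  have hsecond (i j : Fin dd) :
      fderiv ℝ (fun v ↦ f' (ξ ⬝ᵥ v) * ξ j) u (Pi.single i 1) = f'' * ξ j * ξ i :=
    fderiv_comp_dotProduct_single (hf'.mul_const (ξ j)) i
  simp only [divAGrad, hfirst, hsecond]
  simp only [dotProduct, mulVec, Finset.mul_sum, Finset.sum_mul]
  exact Finset.sum_congr rfl fun i _ ↦ Finset.sum_congr rfl fun j _ ↦ by ring

theorem divAGrad_hartley (𝒜 : Matrix (Fin dd) (Fin dd) ℝ) (k : Fin dd → ℤ) (u : Fin dd → ℝ) :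
    divAGrad 𝒜 (hartley k) u = -(waveVector k ⬝ᵥ 𝒜 *ᵥ waveVector k) * hartley k u := by
  have hwave := divAGrad_comp_dotProduct 𝒜 (u := u) (ξ := waveVector k)
    (fun r ↦ (Real.hasDerivAt_cos r).fun_add (Real.hasDerivAt_sin r))
    ((Real.hasDerivAt_sin _).fun_neg.fun_add (Real.hasDerivAt_cos _))
  rw [← neg_add, mul_neg, ← neg_mul] at hwave
  exact hwave

theorem divAGrad_const_mul (𝒜 : Matrix (Fin dd) (Fin dd) ℝ) (c : ℝ) (e : (Fin dd → ℝ) → ℝ)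
    (u : Fin dd → ℝ) : divAGrad 𝒜 (fun v ↦ c * e v) u = c * divAGrad 𝒜 e u := by
  have hfderiv (h : (Fin dd → ℝ) → ℝ) (v w : Fin dd → ℝ) :
      fderiv ℝ (fun v ↦ c * h v) v w = c * fderiv ℝ h v w := by
    rw [show (fun v ↦ c * h v) = c • h from rfl, fderiv_const_smul_field]
    rfl
  simp only [divAGrad, hfderiv, Finset.mul_sum, mul_left_comm]

theorem continuous_divAGrad (𝒜 : Matrix (Fin dd) (Fin dd) ℝ) {e : (Fin dd → ℝ) → ℝ}
    (he : ContDiff ℝ 2 e) : Continuous (divAGrad 𝒜 e) := by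
  have hfirst (j : Fin dd) : ContDiff ℝ 1 fun v ↦ fderiv ℝ e v (Pi.single j 1) :=
    (he.fderiv_right le_rfl).clm_apply contDiff_const
  exact continuous_finsetSum _ fun i _ ↦ continuous_finsetSum _ fun j _ ↦
    (((hfirst j).continuous_fderiv one_ne_zero).clm_apply continuous_const).const_mul _

end ConstantCoefficients

section WeakSolution

variable {dd : ℕ}

/-- Lebesgue measure on the space-time cylinder `[0, T] × [-1, 1]^d`. -/
noncomputable abbrev spaceTimeMeasure (T : ℝ) (dd : ℕ) : Measure (ℝ × (Fin dd → ℝ)) :=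
  (volume.restrict (Icc 0 T)).prod (volume.restrict (Box dd))

theorem memLp_box_of_continuous {e : (Fin dd → ℝ) → ℝ} (he : Continuous e) (q : ENNReal) :
    MemLp e q (volume.restrict (Box dd)) := by
  obtain ⟨C, hC⟩ := (isCompact_box dd).exists_bound_of_continuousOn he.continuousOn
  exact .of_bound he.aestronglyMeasurable C <|
    ae_restrict_of_forall_mem (isCompact_box dd).measurableSet hC

namespace IsWeakSolution

variable {T : ℝ} {𝒜 : Matrix (Fin dd) (Fin dd) ℝ} {φ ψ : ℝ → ℝ} {ρ₀ : (Fin dd → ℝ) → ℝ}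
  {ρ ρ₁ ρ₂ : ℝ → (Fin dd → ℝ) → ℝ} {e : (Fin dd → ℝ) → ℝ}

theorem memLp_comp (hρ : IsWeakSolution T 𝒜 φ ρ₀ ρ) (hψ : Monotone ψ) (q : ENNReal)
    (μ : Measure (ℝ × (Fin dd → ℝ))) [IsFiniteMeasure μ] :
    MemLp (fun p ↦ ψ (ρ p.1 p.2)) q μ := by
  obtain ⟨hmeas, ⟨M, hM⟩, -⟩ := hρ
  exact .of_bound (hψ.measurable.comp hmeas).aestronglyMeasurable (max |ψ (-M)| |ψ M|) <|
    .of_forall fun p ↦ abs_le_max_abs_abs (hψ (neg_le_of_abs_le (hM p.1 p.2)))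
      (hψ (le_of_abs_le (hM p.1 p.2)))

theorem integrable_comp_mul (hρ : IsWeakSolution T 𝒜 φ ρ₀ ρ) (hψ : Monotone ψ)
    (he : Continuous e) : Integrable (fun p ↦ ψ (ρ p.1 p.2) * e p.2) (spaceTimeMeasure T dd) :=
  (hρ.memLp_comp hψ 2 _).integrable_mul ((memLp_box_of_continuous he 2).comp_snd _)

theorem intervalIntegrable_integral_comp_mul (hρ : IsWeakSolution T 𝒜 φ ρ₀ ρ) (hT : 0 ≤ T)
    (hψ : Monotone ψ) (he : Continuous e) :
    IntervalIntegrable (fun t ↦ ∫ u in Box dd, ψ (ρ t u) * e u) volume 0 T :=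
  (intervalIntegrable_iff_integrableOn_Icc_of_le hT).2
    (hρ.integrable_comp_mul hψ he).integral_prod_left

theorem integral_mul_deriv_add (hρ : IsWeakSolution T 𝒜 φ ρ₀ ρ) (hT : 0 ≤ T) (hφ : Monotone φ)
    (he : ContDiff ℝ 2 e) (hper : SpacePeriodic e) {θ : ℝ → ℝ} (hθ : ContDiff ℝ 2 θ)
    (hθT : θ T = 0) :
    ∫ t in 0..T, ((∫ u in Box dd, ρ t u * e u) * deriv θ t +
        (∫ u in Box dd, φ (ρ t u) * divAGrad 𝒜 e u) * θ t) =
      -∫ u in Box dd, ρ₀ u * (θ 0 * e u) := by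
  have htest := hρ.2.2.2 (fun t u ↦ θ t * e u) (by fun_prop) fun t u k ↦ by simp only [hper u k]
  simp only [hθT, zero_mul, mul_zero, integral_zero, divAGrad_const_mul,
    deriv_mul_const_field] at htest
  rw [← eq_neg_of_add_eq_zero_left htest, intervalIntegral.integral_of_le hT,
    ← integral_Icc_eq_integral_Ioc]
  refine integral_congr_ae ?_
  filter_upwards [(hρ.integrable_comp_mul monotone_id he.continuous).prod_right_ae,
    (hρ.integrable_comp_mul hφ (continuous_divAGrad 𝒜 he)).prod_right_ae] with t hW hV
  simp only [id_eq] at hW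
  rw [← integral_mul_const, ← integral_mul_const,
    ← integral_add (hW.mul_const _) (hV.mul_const _)]
  congr 1 with u
  ring

theorem ae_integral_sub_mul (h1 : IsWeakSolution T 𝒜 φ ρ₀ ρ₁) (h2 : IsWeakSolution T 𝒜 φ ρ₀ ρ₂)
    (hψ : Monotone ψ) (he : Continuous e) :
    ∀ᵐ t ∂volume.restrict (Icc 0 T), ∫ u in Box dd, (ψ (ρ₁ t u) - ψ (ρ₂ t u)) * e u =
      (∫ u in Box dd, ψ (ρ₁ t u) * e u) - ∫ u in Box dd, ψ (ρ₂ t u) * e u := by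
  filter_upwards [(h1.integrable_comp_mul hψ he).prod_right_ae,
    (h2.integrable_comp_mul hψ he).prod_right_ae] with t ht₁ ht₂
  simpa only [sub_mul] using integral_sub ht₁ ht₂

theorem intervalIntegrable_integral_sub_mul (h1 : IsWeakSolution T 𝒜 φ ρ₀ ρ₁)
    (h2 : IsWeakSolution T 𝒜 φ ρ₀ ρ₂) (hT : 0 ≤ T) (hψ : Monotone ψ) (he : Continuous e) :
    IntervalIntegrable (fun t ↦ ∫ u in Box dd, (ψ (ρ₁ t u) - ψ (ρ₂ t u)) * e u) volume 0 T :=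
  ((h1.intervalIntegrable_integral_comp_mul hT hψ he).sub
    (h2.intervalIntegrable_integral_comp_mul hT hψ he)).congr_ae <| by
      rw [uIoc_of_le hT]
      filter_upwards [ae_restrict_of_ae_restrict_of_subset Ioc_subset_Icc_self
        (h1.ae_integral_sub_mul h2 hψ he)] with t ht using ht.symm

theorem integral_sub_mul_deriv_add (h1 : IsWeakSolution T 𝒜 φ ρ₀ ρ₁)
    (h2 : IsWeakSolution T 𝒜 φ ρ₀ ρ₂) (hT : 0 ≤ T) (hφ : Monotone φ) (he : ContDiff ℝ 2 e)
    (hper : SpacePeriodic e) {θ : ℝ → ℝ} (hθ : ContDiff ℝ 2 θ) (hθT : θ T = 0) :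
    ∫ t in 0..T, ((∫ u in Box dd, (ρ₁ t u - ρ₂ t u) * e u) * deriv θ t +
      (∫ u in Box dd, (φ (ρ₁ t u) - φ (ρ₂ t u)) * divAGrad 𝒜 e u) * θ t) = 0 := by
  have hAe := continuous_divAGrad 𝒜 he
  have hint {ρ : ℝ → (Fin dd → ℝ) → ℝ} (h : IsWeakSolution T 𝒜 φ ρ₀ ρ) :
      IntervalIntegrable (fun t ↦ (∫ u in Box dd, ρ t u * e u) * deriv θ t +
        (∫ u in Box dd, φ (ρ t u) * divAGrad 𝒜 e u) * θ t) volume 0 T :=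
    ((h.intervalIntegrable_integral_comp_mul hT monotone_id he.continuous).mul_continuousOn
      (hθ.continuous_deriv one_le_two).continuousOn).add
    ((h.intervalIntegrable_integral_comp_mul hT hφ hAe).mul_continuousOn
      hθ.continuous.continuousOn)
  have hsub := intervalIntegral.integral_sub (hint h1) (hint h2)
  rw [h1.integral_mul_deriv_add hT hφ he hper hθ hθT,
    h2.integral_mul_deriv_add hT hφ he hper hθ hθT, sub_self] at hsub
  refine (intervalIntegral.integral_congr_ae_restrict ?_).trans hsub
  rw [uIoc_of_le hT]
  refine ae_restrict_of_ae_restrict_of_subset Ioc_subset_Icc_self ?_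
  filter_upwards [h1.ae_integral_sub_mul h2 monotone_id he.continuous,
    h1.ae_integral_sub_mul h2 hφ hAe] with t hW hV
  simp only [id_eq] at hW
  rw [hW, hV]
  ring

theorem ae_integral_sub_mul_eq (h1 : IsWeakSolution T 𝒜 φ ρ₀ ρ₁)
    (h2 : IsWeakSolution T 𝒜 φ ρ₀ ρ₂) (hT : 0 ≤ T) (hφ : Monotone φ)
    (he : ContDiff ℝ 2 e) (hper : SpacePeriodic e) :
    ∀ᵐ t ∂volume.restrict (Icc 0 T), ∫ u in Box dd, (ρ₁ t u - ρ₂ t u) * e u =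
      ∫ s in 0..t, ∫ u in Box dd, (φ (ρ₁ s u) - φ (ρ₂ s u)) * divAGrad 𝒜 e u :=
  ae_eq_primitive_of_forall_integral_deriv_add hT
    (h1.intervalIntegrable_integral_sub_mul h2 hT monotone_id he.continuous)
    (h1.intervalIntegrable_integral_sub_mul h2 hT hφ (continuous_divAGrad 𝒜 he)) fun _ hθ hθT ↦
      h1.integral_sub_mul_deriv_add h2 hT hφ he hper (hθ.of_le (by norm_cast)) hθT

theorem ae_integral_sub_mul_hartley (h1 : IsWeakSolution T 𝒜 φ ρ₀ ρ₁)
    (h2 : IsWeakSolution T 𝒜 φ ρ₀ ρ₂) (hT : 0 ≤ T) (hφ : Monotone φ) (k : Fin dd → ℤ) :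
    ∀ᵐ t ∂volume.restrict (Icc 0 T), ∫ u in Box dd, (ρ₁ t u - ρ₂ t u) * hartley k u =
      -(waveVector k ⬝ᵥ 𝒜 *ᵥ waveVector k) *
        ∫ s in 0..t, ∫ u in Box dd, (φ (ρ₁ s u) - φ (ρ₂ s u)) * hartley k u := by
  filter_upwards [h1.ae_integral_sub_mul_eq h2 hT hφ (contDiff_hartley k)
    (spacePeriodic_hartley k)] with t ht
  simp only [ht, divAGrad_hartley, mul_left_comm _ (-(waveVector k ⬝ᵥ _)), integral_const_mul,
    intervalIntegral.integral_const_mul]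

theorem integral_sub_mul_sub_hartley_nonpos (h1 : IsWeakSolution T 𝒜 φ ρ₀ ρ₁)
    (h2 : IsWeakSolution T 𝒜 φ ρ₀ ρ₂) (hT : 0 ≤ T) (h𝒜 : ∀ ξ : Fin dd → ℝ, 0 ≤ ξ ⬝ᵥ 𝒜 *ᵥ ξ)
    (hφ : Monotone φ) (k : Fin dd → ℤ) :
    ∫ t in Icc 0 T, (∫ u in Box dd, (ρ₁ t u - ρ₂ t u) * hartley k u) *
      ∫ u in Box dd, (φ (ρ₁ t u) - φ (ρ₂ t u)) * hartley k u ≤ 0 := by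
  set V : ℝ → ℝ := fun t ↦ ∫ u in Box dd, (φ (ρ₁ t u) - φ (ρ₂ t u)) * hartley k u
  have hV : IntervalIntegrable V volume 0 T :=
    h1.intervalIntegrable_integral_sub_mul h2 hT hφ (contDiff_hartley (n := 0) k).continuous
  calc ∫ t in Icc 0 T, (∫ u in Box dd, (ρ₁ t u - ρ₂ t u) * hartley k u) * V t
      = ∫ t in Icc 0 T, -(waveVector k ⬝ᵥ 𝒜 *ᵥ waveVector k) * ((∫ s in 0..t, V s) * V t) := by
        refine integral_congr_ae ?_
        filter_upwards [h1.ae_integral_sub_mul_hartley h2 hT hφ k] with t ht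
        rw [ht, mul_assoc]
    _ = -(waveVector k ⬝ᵥ 𝒜 *ᵥ waveVector k) * ((∫ t in 0..T, V t) ^ 2 / 2) := by
        rw [integral_const_mul, integral_Icc_eq_integral_Ioc, ← intervalIntegral.integral_of_le hT,
          integral_primitive_mul_self hV]
    _ ≤ 0 := mul_nonpos_of_nonpos_of_nonneg (neg_nonpos.2 (h𝒜 _)) (by positivity)

theorem comp_ae_eq (h1 : IsWeakSolution T 𝒜 φ ρ₀ ρ₁)
    (h2 : IsWeakSolution T 𝒜 φ ρ₀ ρ₂) (hT : 0 ≤ T) (h𝒜 : ∀ ξ : Fin dd → ℝ, 0 ≤ ξ ⬝ᵥ 𝒜 *ᵥ ξ)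
    (hφ : Monotone φ) : ∀ᵐ p ∂spaceTimeMeasure T dd, φ (ρ₁ p.1 p.2) = φ (ρ₂ p.1 p.2) := by
  have hw : MemLp (fun p ↦ ρ₁ p.1 p.2 - ρ₂ p.1 p.2) 2 (spaceTimeMeasure T dd) :=
    (h1.memLp_comp monotone_id 2 _).sub (h2.memLp_comp monotone_id 2 _)
  have hv : MemLp (fun p ↦ φ (ρ₁ p.1 p.2) - φ (ρ₂ p.1 p.2)) 2 (spaceTimeMeasure T dd) :=
    (h1.memLp_comp hφ 2 _).sub (h2.memLp_comp hφ 2 _)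
  have hnonpos := (isTightFrame_hartley dd).integral_mul_nonpos hw hv
    (h1.integral_sub_mul_sub_hartley_nonpos h2 hT h𝒜 hφ)
  have hnonneg : 0 ≤ fun p : ℝ × (Fin dd → ℝ) ↦
      (ρ₁ p.1 p.2 - ρ₂ p.1 p.2) * (φ (ρ₁ p.1 p.2) - φ (ρ₂ p.1 p.2)) := fun p ↦ by
    rcases le_total (ρ₁ p.1 p.2) (ρ₂ p.1 p.2) with h | h
    · exact mul_nonneg_of_nonpos_of_nonpos (sub_nonpos.2 h) (sub_nonpos.2 (hφ h))
    · exact mul_nonneg (sub_nonneg.2 h) (sub_nonneg.2 (hφ h))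
  filter_upwards [(integral_eq_zero_iff_of_nonneg hnonneg (hw.integrable_mul hv)).1
    (hnonpos.antisymm (integral_nonneg hnonneg))] with p hp
  rcases mul_eq_zero.1 hp with h | h
  · rw [sub_eq_zero.1 h]
  · exact sub_eq_zero.1 h

theorem ae_integral_sub_mul_hartley_eq_zero (h1 : IsWeakSolution T 𝒜 φ ρ₀ ρ₁)
    (h2 : IsWeakSolution T 𝒜 φ ρ₀ ρ₂) (hT : 0 ≤ T) (hφ : Monotone φ)
    (heq : ∀ᵐ p ∂spaceTimeMeasure T dd, φ (ρ₁ p.1 p.2) = φ (ρ₂ p.1 p.2)) (k : Fin dd → ℤ) :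
    ∀ᵐ t ∂volume.restrict (Icc 0 T), ∫ u in Box dd, (ρ₁ t u - ρ₂ t u) * hartley k u = 0 := by
  have hV : ∀ᵐ s ∂volume.restrict (Icc 0 T),
      ∫ u in Box dd, (φ (ρ₁ s u) - φ (ρ₂ s u)) * hartley k u = 0 := by
    filter_upwards [Measure.ae_ae_of_ae_prod heq] with s hs
    exact integral_eq_zero_of_ae (hs.mono fun u hu ↦ by simp [hu])
  filter_upwards [h1.ae_integral_sub_mul_hartley h2 hT hφ k, ae_restrict_mem measurableSet_Icc]
    with t ht htT
  rw [ht, intervalIntegral.integral_of_le htT.1, integral_eq_zero_of_ae, mul_zero]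
  exact ae_restrict_of_ae_restrict_of_subset
    (Ioc_subset_Icc_self.trans (Icc_subset_Icc_right htT.2)) hV

end IsWeakSolution

end WeakSolution

end WeakSolUniq

open scoped Matrix in
theorem uniqueness_weak_solutions_hydrodynamic_equation_general {dd : ℕ} {T : ℝ}
    {𝒜 : Matrix (Fin dd) (Fin dd) ℝ} {φ : ℝ → ℝ} {ρ₀ : (Fin dd → ℝ) → ℝ}
    {ρ₁ ρ₂ : ℝ → (Fin dd → ℝ) → ℝ} (hT : 0 ≤ T) (h𝒜 : ∀ ξ : Fin dd → ℝ, 0 ≤ ξ ⬝ᵥ 𝒜 *ᵥ ξ)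
    (hφ : Monotone φ) (h1 : IsWeakSolution T 𝒜 φ ρ₀ ρ₁) (h2 : IsWeakSolution T 𝒜 φ ρ₀ ρ₂) :
    ∀ᵐ p ∂spaceTimeMeasure T dd, ρ₁ p.1 p.2 = ρ₂ p.1 p.2 := by
  have hw : MemLp (fun p ↦ ρ₁ p.1 p.2 - ρ₂ p.1 p.2) 2 (spaceTimeMeasure T dd) :=
    (h1.memLp_comp monotone_id 2 _).sub (h2.memLp_comp monotone_id 2 _)
  have hφρ := h1.comp_ae_eq h2 hT h𝒜 hφ
  filter_upwards [(isTightFrame_hartley dd).ae_eq_zero_of_coeff hw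
    (h1.ae_integral_sub_mul_hartley_eq_zero h2 hT hφ hφρ)] with p hp
  exact sub_eq_zero.1 hp

/-- uniqueness of bounded weak solutions of the degenerate
parabolic equation `∂_t ρ = ∇·(𝒜∇φ(ρ))` on the torus `[−1,1]^d` with periodic
boundary conditions, for `φ` Lipschitz, non-decreasing, `φ(0) = 0`, and `𝒜`
constant, symmetric and uniformly elliptic: two bounded weak solutions with the
same bounded initial profile `ρ₀` agree almost everywhere on `[0,T]×U^d`. -/
theorem uniqueness_weak_solutions_hydrodynamic_equation
    (dd : ℕ) (hdd : 0 < dd) (T ε₀ : ℝ) (hT : 0 < T) (hε : 0 < ε₀)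
    (𝒜 : Matrix (Fin dd) (Fin dd) ℝ) (hsym : 𝒜.IsSymm)
    (hell : ∀ ξ : Fin dd → ℝ,
      ε₀ * ∑ i, ξ i ^ 2 ≤ ∑ i, ∑ j, ξ i * 𝒜 i j * ξ j ∧
      ∑ i, ∑ j, ξ i * 𝒜 i j * ξ j ≤ ε₀⁻¹ * ∑ i, ξ i ^ 2)
    (φ : ℝ → ℝ) (Lc : NNReal) (hLip : LipschitzWith Lc φ)
    (hmono : Monotone φ) (hφ0 : φ 0 = 0) (hφnn : ∀ r, 0 ≤ r → 0 ≤ φ r)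
    (ρ₀ : (Fin dd → ℝ) → ℝ) (hρ₀ : ∃ M : ℝ, ∀ u, |ρ₀ u| ≤ M)
    (ρ₁ ρ₂ : ℝ → (Fin dd → ℝ) → ℝ)
    (h1 : IsWeakSolution T 𝒜 φ ρ₀ ρ₁) (h2 : IsWeakSolution T 𝒜 φ ρ₀ ρ₂) :
    ∀ᵐ p ∂((volume.restrict (Set.Icc (0 : ℝ) T)).prod
        (volume.restrict (Box dd))), ρ₁ p.1 p.2 = ρ₂ p.1 p.2 := by
  refine uniqueness_weak_solutions_hydrodynamic_equation_general hT.le (fun ξ ↦ ?_) hmono h1 h2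
  simpa only [dotProduct, Matrix.mulVec, Finset.mul_sum, mul_assoc] using
    (mul_nonneg hε.le (Finset.sum_nonneg fun i _ ↦ sq_nonneg (ξ i))).trans (hell ξ).1
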